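/- arXiv:2602.08780 — 3 statements merged into one kernel-verified Lean document; each statement's English description precedes it below -/
import Mathlib

section
/- Fix a natural number N with 1 ≤ t ≤ N. If (α, β) satisfies the t-deletion non-deformation conditions, then (α, β) satisfies the (t−1)-deletion non-deformation conditions. -/
open Finset

/-!
Write `G i j = (conj α_i * α_j - conj β_i * β_j) / √(C(N, i) * C(N, j))`. By Pascal's rule, the
`(t - 1)`-deletion sum of `G` at `(a', b')` is its `t`-deletion sum at `(a', b')` plus the one at
`(a' + 1, b' + 1)`: incrementing the summation index moves along a diagonal of `G`.
-/

section BinomialSum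

variable {M : Type*} [AddCommMonoid M]

theorem sum_range_choose_nsmul_of_lt {n m : ℕ} (hnm : n < m) (g : ℕ → M) :
    ∑ k ∈ range m, n.choose k • g k = ∑ k ∈ range (n + 1), n.choose k • g k := by
  refine (sum_subset (range_mono hnm) fun k _ hk ↦ ?_).symm
  have hnk : n < k := by simpa using hk
  rw [Nat.choose_eq_zero_of_lt hnk, zero_nsmul]

theorem sum_range_choose_succ_nsmul {n m : ℕ} (hnm : n + 1 < m) (g : ℕ → M) :
    ∑ k ∈ range m, (n + 1).choose k • g k =
      ∑ k ∈ range m, n.choose k • g k + ∑ k ∈ range m, n.choose k • g (k + 1) := by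
  have hnm' : n < m := n.lt_succ_self.trans hnm
  rw [sum_range_choose_nsmul_of_lt hnm, sum_range_choose_nsmul_of_lt hnm',
    sum_range_choose_nsmul_of_lt hnm' fun k ↦ g (k + 1)]
  exact sum_choose_succ_nsmul (fun i _ ↦ g i) n

theorem deletion_step_nonDeformation_general {N n t : ℕ} (hnN : n < N) (G : ℕ → ℕ → M)
    (h : ∀ a b : ℕ, a ≤ t + 1 → b ≤ t + 1 →
      ∑ k ∈ range (N + 1), n.choose k • G (k + a) (k + b) = 0) :
    ∀ a b : ℕ, a ≤ t → b ≤ t →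
      ∑ k ∈ range (N + 1), (n + 1).choose k • G (k + a) (k + b) = 0 := by
  intro a b ha hb
  have h_shift : ∑ k ∈ range (N + 1), n.choose k • G (k + 1 + a) (k + 1 + b) = 0 := by
    simpa only [add_assoc, add_comm 1] using
      h (a + 1) (b + 1) (Nat.succ_le_succ ha) (Nat.succ_le_succ hb)
  rw [sum_range_choose_succ_nsmul (Nat.succ_lt_succ hnN) fun k ↦ G (k + a) (k + b),
    h a b (Nat.le_succ_of_le ha) (Nat.le_succ_of_le hb), h_shift, add_zero]

end BinomialSum

theorem deletion_step_nonDeformation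
    (N t : ℕ) (ht1 : 1 ≤ t) (htN : t ≤ N)
    (α β : ℕ → ℂ) (hα : ∀ k : ℕ, N < k → α k = 0) (hβ : ∀ k : ℕ, N < k → β k = 0)
    (h : ∀ a' b' : ℕ, a' ≤ t → b' ≤ t →
      ∑ k ∈ Finset.range (N + 1), ((N - (t)).choose k : ℂ) / ((Real.sqrt ((N.choose (k + a') * N.choose (k + b') : ℕ)) : ℝ) : ℂ) * ((starRingEnd ℂ) (α (k + a')) * α (k + b') - (starRingEnd ℂ) (β (k + a')) * β (k + b')) = 0) :
    ∀ a' b' : ℕ, a' ≤ t - 1 → b' ≤ t - 1 →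
      ∑ k ∈ Finset.range (N + 1), ((N - (t - 1)).choose k : ℂ) / ((Real.sqrt ((N.choose (k + a') * N.choose (k + b') : ℕ)) : ℝ) : ℂ) * ((starRingEnd ℂ) (α (k + a')) * α (k + b') - (starRingEnd ℂ) (β (k + a')) * β (k + b')) = 0 := by
  obtain ⟨s, rfl⟩ := Nat.exists_eq_add_of_le' ht1
  have hlt : N - (s + 1) < N := by omega
  have hsucc : N - s = N - (s + 1) + 1 := by omega
  simp only [add_tsub_cancel_right, hsucc, div_eq_mul_inv, ← nsmul_eq_mul, smul_mul_assoc] at h ⊢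
  exact deletion_step_nonDeformation_general hlt
    (fun i j ↦ ((Real.sqrt ((N.choose i * N.choose j : ℕ)) : ℝ) : ℂ)⁻¹ *
      ((starRingEnd ℂ) (α i) * α j - (starRingEnd ℂ) (β i) * β j)) h
end

section
/- Fix natural numbers N, t, s with t + s ≤ N. Then (α, β) satisfies the (t, s) full-insdel non-deformation conditions (C6) if and only if (α, β) satisfies the (t+s)-deletion non-deformation conditions. (This is the combinatorial core of Theorem 4: the full-insdel conditions for t insertions followed by s deletions are equivalent to the (t+s)-deletion conditions of Aydin et al.) -/
open Finset

/-!
Write `E` for the shift of a sequence `f`, so that `∑ₖ C(M, k) f(k)` is the value of `(1 + E) ^ M f`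
at `0`. The factorisation `(1 + E) ^ (M + d) = (1 + E) ^ d (1 + E) ^ M` exhibits a condition with
weights `C(M + d, k)` as a combination of conditions with weights `C(M, k)`. Along a diagonal
`k ↦ g (k + a) (k + b)` of a kernel `g`, shifting by `i ≤ d` replaces `(a, b)` by `(a + i, b + i)`,
which stays in the range of the deletion conditions. Here `d = 2ℓ + j` and `M = N - (t + s)`; the
case `ℓ = j = 0` gives the converse.
-/

section BinomialSum

variable {A : Type*} [AddCommMonoid A]

/-- The binomial transform `∑_{k ≤ M} C(M, k) f(k)` of a sequence, i.e. `((1 + E) ^ M f) 0` for the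
shift `E`. Summing only up to `M` frees its identities from any support condition on `f`. -/
def binomialSum (M : ℕ) (f : ℕ → A) : A :=
  ∑ k ∈ range (M + 1), M.choose k • f k

theorem binomialSum_zero (f : ℕ → A) : binomialSum 0 f = f 0 := by
  simp [binomialSum]

theorem binomialSum_succ (M : ℕ) (f : ℕ → A) :
    binomialSum (M + 1) f = binomialSum M f + binomialSum M (fun k ↦ f (k + 1)) := by
  have pascal := sum_antidiagonal_choose_succ_nsmul (fun i _ ↦ f i) M
  simp only [Nat.sum_antidiagonal_eq_sum_range_succ_mk] at pascal
  have reflect : ∑ k ∈ range (M + 1), M.choose (M - k) • f (k + 1) =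
      binomialSum M (fun k ↦ f (k + 1)) :=
    sum_congr rfl fun k hk ↦ by rw [Nat.choose_symm (mem_range_succ_iff.mp hk)]
  rwa [reflect] at pascal

theorem binomialSum_add (M d : ℕ) (f : ℕ → A) :
    binomialSum (M + d) f = binomialSum d (fun i ↦ binomialSum M (fun k ↦ f (k + i))) := by
  induction d generalizing f with
  | zero => simp only [binomialSum_zero, add_zero]
  | succ d ih =>
    rw [← add_assoc, binomialSum_succ, ih, ih, binomialSum_succ]
    simp only [add_assoc]

theorem binomialSum_eq_zero {M : ℕ} {f : ℕ → A} (hf : ∀ k ≤ M, f k = 0) :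
    binomialSum M f = 0 :=
  sum_eq_zero fun k hk ↦ by rw [hf k (mem_range_succ_iff.mp hk), smul_zero]

theorem sum_range_choose_nsmul_eq_binomialSum {M N : ℕ} (hMN : M ≤ N) (f : ℕ → A) :
    ∑ k ∈ range (N + 1), M.choose k • f k = binomialSum M f := by
  refine (sum_subset (range_mono (by lia)) fun k _ hk ↦ ?_).symm
  rw [Nat.choose_eq_zero_of_lt (by simpa using hk), zero_smul]

theorem binomialSum_add_diagonal_eq_zero {M D d a b : ℕ} {g : ℕ → ℕ → A}
    (hg : ∀ a b, a ≤ D → b ≤ D → binomialSum M (fun k ↦ g (k + a) (k + b)) = 0)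
    (ha : a + d ≤ D) (hb : b + d ≤ D) :
    binomialSum (M + d) (fun k ↦ g (k + a) (k + b)) = 0 := by
  rw [binomialSum_add]
  refine binomialSum_eq_zero fun i hi ↦ ?_
  simpa only [add_assoc, add_comm i] using hg (a + i) (b + i) (by lia) (by lia)

theorem fullInsdel_iff_deletion_nonDeformation_general
    (N t s : ℕ) (hts : t + s ≤ N) (g : ℕ → ℕ → A) :
    (∀ ℓ j a' b' : ℕ, ℓ ≤ min s t → j ≤ t - ℓ → a' ≤ t + s - 2 * ℓ - j → b' ≤ t + s - 2 * ℓ - j →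
      ∑ k ∈ range (N + 1), (N - t - s + 2 * ℓ + j).choose k • g (k + a') (k + b') = 0) ↔
    (∀ a' b' : ℕ, a' ≤ t + s → b' ≤ t + s →
      ∑ k ∈ range (N + 1), (N - (t + s)).choose k • g (k + a') (k + b') = 0) := by
  constructor
  · intro insdel a b ha hb
    simpa only [Nat.sub_sub, mul_zero, add_zero] using
      insdel 0 0 a b (Nat.zero_le _) (Nat.zero_le _) ha hb
  · intro deletion ℓ j a b hℓ hj ha hb
    have hdeletion : ∀ a b, a ≤ t + s → b ≤ t + s →
        binomialSum (N - (t + s)) (fun k ↦ g (k + a) (k + b)) = 0 := fun a b ha hb ↦ by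
      rw [← sum_range_choose_nsmul_eq_binomialSum (Nat.sub_le N (t + s)), deletion a b ha hb]
    rw [sum_range_choose_nsmul_eq_binomialSum (by lia), Nat.sub_sub, add_assoc]
    exact binomialSum_add_diagonal_eq_zero hdeletion (by lia) (by lia)

end BinomialSum

theorem fullInsdel_iff_deletion_nonDeformation
    (N t s : ℕ) (hts : t + s ≤ N)
    (α β : ℕ → ℂ) (hα : ∀ k : ℕ, N < k → α k = 0) (hβ : ∀ k : ℕ, N < k → β k = 0) :
    (∀ ℓ j a' b' : ℕ, ℓ ≤ min s t → j ≤ t - ℓ → a' ≤ t + s - 2 * ℓ - j → b' ≤ t + s - 2 * ℓ - j →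
      ∑ k ∈ Finset.range (N + 1), ((N - t - s + 2 * ℓ + j).choose k : ℂ) / ((Real.sqrt ((N.choose (k + a') * N.choose (k + b') : ℕ)) : ℝ) : ℂ) * ((starRingEnd ℂ) (α (k + a')) * α (k + b') - (starRingEnd ℂ) (β (k + a')) * β (k + b')) = 0) ↔
    (∀ a' b' : ℕ, a' ≤ t + s → b' ≤ t + s →
      ∑ k ∈ Finset.range (N + 1), ((N - (t + s)).choose k : ℂ) / ((Real.sqrt ((N.choose (k + a') * N.choose (k + b') : ℕ)) : ℝ) : ℂ) * ((starRingEnd ℂ) (α (k + a')) * α (k + b') - (starRingEnd ℂ) (β (k + a')) * β (k + b')) = 0) := by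
  simpa only [nsmul_eq_mul, mul_div_assoc', div_mul_eq_mul_div] using
    fullInsdel_iff_deletion_nonDeformation_general N t s hts fun x y ↦
      ((starRingEnd ℂ) (α x) * α y - (starRingEnd ℂ) (β x) * β y) /
        ((Real.sqrt ((N.choose x * N.choose y : ℕ)) : ℝ) : ℂ)
end

section
/- Fix natural numbers N, t, s with t + s ≤ N. Then (α, β) satisfies the (t, s) full-insdel non-deformation conditions (C6) if and only if (α, β) satisfies the (t, s) semi-insdel non-deformation conditions (C4). (Hence for permutation-invariant codes, the non-deformation conditions for t insertions followed by s deletions coincide with those for s deletions followed by t insertions.) -/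
/-!
Write `D m a b = ∑ₖ C(m, k) g(k + a, k + b)`, where `g` is the weighted difference of the overlaps
of `α` and `β`. In terms of the diagonal shift `E`, which sends `g(a, b)` to `g(a + 1, b + 1)`, this
is `(1 + E)ᵐ g`, so `D (m + i) a b` is a combination of the values `D m (a + k) (b + k)` with
`k ≤ i`. Hence the vanishing of `D (N - t - s)` on the square `[0, t + s]²`, which is C4 at `j = 0`,
forces `D (N - t - s + i)` to vanish on `[0, t + s - i]²`. Taking `i = 2ℓ + j` gives C6, and C4 is
the case `ℓ = 0` of C6.
-/

open Finset

section DiagonalBinomialSum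

variable {M : Type*} [AddCommMonoid M]

/-- The binomially weighted sum of the kernel `g` along the diagonal issuing from `(a, b)`. The
non-deformation conditions state that such sums vanish; here the range of summation is exactly the
support of `m.choose`, independently of the length of the code. -/
def diagonalBinomialSum (g : ℕ → ℕ → M) (m a b : ℕ) : M :=
  ∑ k ∈ range (m + 1), m.choose k • g (k + a) (k + b)

theorem sum_range_choose_nsmul_eq_diagonalBinomialSum (g : ℕ → ℕ → M) {m n : ℕ} (hmn : m ≤ n)
    (a b : ℕ) :
    ∑ k ∈ range (n + 1), m.choose k • g (k + a) (k + b) = diagonalBinomialSum g m a b := by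
  refine (sum_subset (range_mono (by lia)) fun k _ hk ↦ ?_).symm
  rw [Nat.choose_eq_zero_of_lt (by simpa using hk), zero_nsmul]

theorem diagonalBinomialSum_zero (g : ℕ → ℕ → M) (a b : ℕ) :
    diagonalBinomialSum g 0 a b = g a b := by
  simp [diagonalBinomialSum]

theorem diagonalBinomialSum_succ (g : ℕ → ℕ → M) (m a b : ℕ) :
    diagonalBinomialSum g (m + 1) a b =
      diagonalBinomialSum g m a b + diagonalBinomialSum g m (a + 1) (b + 1) := by
  simpa only [diagonalBinomialSum, add_assoc, add_comm a 1, add_comm b 1] using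
    sum_choose_succ_nsmul (fun k _ ↦ g (k + a) (k + b)) m

theorem diagonalBinomialSum_add (g : ℕ → ℕ → M) (m i a b : ℕ) :
    diagonalBinomialSum g (m + i) a b =
      diagonalBinomialSum (diagonalBinomialSum g m) i a b := by
  induction i generalizing a b with
  | zero => rw [add_zero, diagonalBinomialSum_zero]
  | succ i ih => rw [← add_assoc, diagonalBinomialSum_succ, ih, ih, ← diagonalBinomialSum_succ]

theorem diagonalBinomialSum_add_eq_zero {g : ℕ → ℕ → M} {m d i a b : ℕ}
    (hg : ∀ x ≤ d, ∀ y ≤ d, diagonalBinomialSum g m x y = 0) (ha : i + a ≤ d) (hb : i + b ≤ d) :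
    diagonalBinomialSum g (m + i) a b = 0 := by
  rw [diagonalBinomialSum_add]
  refine sum_eq_zero fun k hk ↦ ?_
  have hki : k ≤ i := mem_range_succ_iff.mp hk
  rw [hg (k + a) (by lia) (k + b) (by lia), nsmul_zero]

theorem fullInsdel_iff_semiInsdel_nonDeformation_general
    (N t s : ℕ) (hts : t + s ≤ N) (g : ℕ → ℕ → M) :
    (∀ ℓ j a b : ℕ, ℓ ≤ min s t → j ≤ t - ℓ → a ≤ t + s - 2 * ℓ - j → b ≤ t + s - 2 * ℓ - j →
      ∑ k ∈ range (N + 1), (N - t - s + 2 * ℓ + j).choose k • g (k + a) (k + b) = 0) ↔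
    (∀ j a b : ℕ, j ≤ t → a ≤ t + s - j → b ≤ t + s - j →
      ∑ k ∈ range (N + 1), (N - t - s + j).choose k • g (k + a) (k + b) = 0) := by
  constructor
  · intro hfull j a b hj ha hb
    exact hfull 0 j a b (Nat.zero_le _) hj ha hb
  · intro hsemi ℓ j a b hℓ hj ha hb
    have hbase : ∀ x ≤ t + s, ∀ y ≤ t + s, diagonalBinomialSum g (N - t - s) x y = 0 := by
      intro x hx y hy
      rw [← sum_range_choose_nsmul_eq_diagonalBinomialSum g (by lia : N - t - s ≤ N)]
      exact hsemi 0 x y (Nat.zero_le _) hx hy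
    rw [sum_range_choose_nsmul_eq_diagonalBinomialSum g (by lia), add_assoc]
    exact diagonalBinomialSum_add_eq_zero hbase (by lia) (by lia)

end DiagonalBinomialSum

/-- The kernel of the non-deformation conditions: the difference of the entries of the rank-one
matrices of `α` and `β`, weighted by the normalization of Dicke states. Where a binomial coefficient
vanishes, so does the kernel, because division by `0` gives `0`. -/
noncomputable def weightedOverlapDiff (N : ℕ) (α β : ℕ → ℂ) (x y : ℕ) : ℂ :=
  ((starRingEnd ℂ) (α x) * α y - (starRingEnd ℂ) (β x) * β y) /
    (Real.sqrt (N.choose x * N.choose y : ℕ) : ℝ)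

theorem fullInsdel_iff_semiInsdel_nonDeformation
    (N t s : ℕ) (hts : t + s ≤ N)
    (α β : ℕ → ℂ) (hα : ∀ k : ℕ, N < k → α k = 0) (hβ : ∀ k : ℕ, N < k → β k = 0) :
    (∀ ℓ j a' b' : ℕ, ℓ ≤ min s t → j ≤ t - ℓ → a' ≤ t + s - 2 * ℓ - j → b' ≤ t + s - 2 * ℓ - j →
      ∑ k ∈ Finset.range (N + 1), ((N - t - s + 2 * ℓ + j).choose k : ℂ) / ((Real.sqrt ((N.choose (k + a') * N.choose (k + b') : ℕ)) : ℝ) : ℂ) * ((starRingEnd ℂ) (α (k + a')) * α (k + b') - (starRingEnd ℂ) (β (k + a')) * β (k + b')) = 0) ↔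
    (∀ j a' b' : ℕ, j ≤ t → a' ≤ t + s - j → b' ≤ t + s - j →
      ∑ k ∈ Finset.range (N + 1), ((N - t - s + j).choose k : ℂ) / ((Real.sqrt ((N.choose (k + a') * N.choose (k + b') : ℕ)) : ℝ) : ℂ) * ((starRingEnd ℂ) (α (k + a')) * α (k + b') - (starRingEnd ℂ) (β (k + a')) * β (k + b')) = 0) := by
  simpa only [weightedOverlapDiff, nsmul_eq_mul, mul_comm_div] using
    fullInsdel_iff_semiInsdel_nonDeformation_general N t s hts (weightedOverlapDiff N α β)
end
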